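/- arXiv:1810.02846 — 2 statements merged into one kernel-verified Lean document; each statement's English description precedes it below -/
import Mathlib

section
/- Choose one representative from each S_d-orbit on Tri^B(n,d). Then the corresponding elements ξ^𝐛_{𝐫,𝐬} form a 𝕜-basis of the free 𝕜-module S^A(n,d), and the corresponding elements η^𝐛_{𝐫,𝐬} form a 𝕜-basis of T^A_𝔞(n,d). -/
open Finset

open scoped Classical TensorProduct

noncomputable section

namespace GS

/-- A *good pair* `(A, 𝔞)`: a `𝕜`-superalgebra `A = ev ⊕ od` which is free as a
`𝕜`-supermodule, together with a subalgebra `𝔞 = aa ⊆ A₀` such that `𝔞` and `A/𝔞` are free,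
a complement `𝔠 = cc` of `𝔞` in `A₀`, and an `(A,𝔞)`-basis `B = B_𝔞 ⊔ B_𝔠 ⊔ B_1`
(encoded by `bas : Basis β 𝕜 A` with the partition `part : β → Fin 3`,
where `0` = `B_𝔞`, `1` = `B_𝔠`, `2` = `B_1`). -/
structure GoodPair (𝕜 A β : Type) [CommRing 𝕜] [NonUnitalRing A] [Module 𝕜 A] : Type where
  ev : Submodule 𝕜 A
  od : Submodule 𝕜 A
  compl : IsCompl ev od
  mul_ee : ∀ a ∈ ev, ∀ b ∈ ev, a * b ∈ ev
  mul_eo : ∀ a ∈ ev, ∀ b ∈ od, a * b ∈ od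
  mul_oe : ∀ a ∈ od, ∀ b ∈ ev, a * b ∈ od
  mul_oo : ∀ a ∈ od, ∀ b ∈ od, a * b ∈ ev
  free_ev : Module.Free 𝕜 ev
  free_od : Module.Free 𝕜 od
  aa : Submodule 𝕜 A
  aa_le_ev : aa ≤ ev
  aa_mul : ∀ a ∈ aa, ∀ b ∈ aa, a * b ∈ aa
  free_aa : Module.Free 𝕜 aa
  free_quot : Module.Free 𝕜 (A ⧸ aa)
  cc : Submodule 𝕜 A
  aa_inf_cc : aa ⊓ cc = ⊥
  aa_sup_cc : aa ⊔ cc = ev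
  bas : Module.Basis β 𝕜 A
  part : β → Fin 3
  bas_mem_aa : ∀ i, part i = 0 → bas i ∈ aa
  bas_mem_cc : ∀ i, part i = 1 → bas i ∈ cc
  bas_mem_od : ∀ i, part i = 2 → bas i ∈ od

variable {𝕜 A β : Type} [CommRing 𝕜] [NonUnitalRing A] [Module 𝕜 A]

/-- An element is homogeneous if it lies in the even or the odd part. -/
def Homog (P : GoodPair 𝕜 A β) (a : A) : Prop := a ∈ P.ev ∨ a ∈ P.od

/-- `H`, the set of nonzero homogeneous elements of `A`. -/
def Hset (P : GoodPair 𝕜 A β) : Set A := {a | Homog P a ∧ a ≠ 0}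

/-- `⟨𝐚,𝐜⟩ = #{(k,l) : k > l, a_k odd, c_l odd}` (the Koszul sign count). -/
def koz (od : Submodule 𝕜 A) {d : ℕ} (a c : Fin d → A) : ℕ :=
  (univ.filter fun kl : Fin d × Fin d => kl.2 < kl.1 ∧ a kl.1 ∈ od ∧ c kl.2 ∈ od).card

/-- `⟨σ;𝐚⟩ = #{(k,l) : k < l, σ⁻¹k > σ⁻¹l, a_k and a_l odd}`. -/
def sgnc (od : Submodule 𝕜 A) {d : ℕ} (σ : Equiv.Perm (Fin d)) (a : Fin d → A) : ℕ :=
  (univ.filter fun kl : Fin d × Fin d =>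
    kl.1 < kl.2 ∧ σ⁻¹ kl.2 < σ⁻¹ kl.1 ∧ a kl.1 ∈ od ∧ a kl.2 ∈ od).card

/-- `⟨𝐚,𝐫,𝐬⟩ = #{(k,l) : k < l, a_k, a_l odd, (a_k,r_k,s_k) > (a_l,r_l,s_l)}` with respect to
the fixed total order `ord` on `A × [1,n] × [1,n]`. -/
def ang {n : ℕ} (od : Submodule 𝕜 A) (ord : LinearOrder (A × Fin n × Fin n))
    {d : ℕ} (a : Fin d → A) (r s : Fin d → Fin n) : ℕ :=
  (univ.filter fun kl : Fin d × Fin d =>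
    kl.1 < kl.2 ∧ a kl.1 ∈ od ∧ a kl.2 ∈ od ∧
      ord.lt (a kl.2, r kl.2, s kl.2) (a kl.1, r kl.1, s kl.1)).card

/-- `(𝐚,𝐫,𝐬) ∈ Tri^H(n,d)`: all entries are nonzero homogeneous, and a repeated entry
triple forces evenness. -/
def IsTriH (P : GoodPair 𝕜 A β) {n d : ℕ} (a : Fin d → A) (r s : Fin d → Fin n) : Prop :=
  (∀ k, a k ∈ Hset P) ∧
    ∀ k l : Fin d, k ≠ l → (a k, r k, s k) = (a l, r l, s l) → a k ∈ P.ev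

/-- `(𝐛,𝐫,𝐬) ∈ Tri^B(n,d)` for words of basis elements. -/
def IsTriB (P : GoodPair 𝕜 A β) {n d : ℕ} (b : Fin d → β) (r s : Fin d → Fin n) : Prop :=
  ∀ k l : Fin d, k ≠ l → ((b k, r k, s k) : β × Fin n × Fin n) = (b l, r l, s l) →
    P.part (b k) ≠ 2

/-- Minimal length representatives of the cosets `(S_e × S_f)\S_{e+f}`. -/
def IsShuffle (e f : ℕ) (σ : Equiv.Perm (Fin (e + f))) : Prop :=
  (∀ k l : Fin (e + f), k < l → (l : ℕ) < e → σ⁻¹ k < σ⁻¹ l) ∧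
  (∀ k l : Fin (e + f), k < l → e ≤ (k : ℕ) → σ⁻¹ k < σ⁻¹ l)

/-- The tower of superalgebras `M_n(A)^{⊗d}`, `d ≥ 0`, axiomatised.  `X a r s` is the pure
tensor `ξ^{a_1}_{r_1,s_1} ⊗ ⋯ ⊗ ξ^{a_d}_{r_d,s_d}` of matrix units; it is multilinear in the
`A`-entries, the pure tensors of basis elements form a basis, multiplication is the sign-twisted
(Koszul) componentwise one, `act` is the right action of the symmetric groups by superalgebra
automorphisms, `evT/odT` is the induced supermodule structure, `star` is the `*`-(shuffle)
product and `nab` gives the components of the deconcatenation coproduct `∇`. -/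
structure Tower (𝕜 A β : Type) [CommRing 𝕜] [NonUnitalRing A] [Module 𝕜 A]
    (n : ℕ) (T : ℕ → Type) [∀ e, NonUnitalRing (T e)] [∀ e, Module 𝕜 (T e)]
    (P : GoodPair 𝕜 A β) : Type where
  X : ∀ {e : ℕ}, (Fin e → A) → (Fin e → Fin n) → (Fin e → Fin n) → T e
  X_update_add : ∀ {e : ℕ} (a : Fin e → A) (r s : Fin e → Fin n) (k : Fin e) (x y : A),
    X (Function.update a k (x + y)) r s
      = X (Function.update a k x) r s + X (Function.update a k y) r s
  X_update_smul : ∀ {e : ℕ} (a : Fin e → A) (r s : Fin e → Fin n) (k : Fin e) (c : 𝕜) (x : A),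
    X (Function.update a k (c • x)) r s = c • X (Function.update a k x) r s
  bas : ∀ e : ℕ, Module.Basis ((Fin e → β) × (Fin e → Fin n) × (Fin e → Fin n)) 𝕜 (T e)
  bas_eq : ∀ (e : ℕ) (b : Fin e → β) (r s : Fin e → Fin n),
    bas e (b, r, s) = X (fun k => P.bas (b k)) r s
  X_mul : ∀ {e : ℕ} (a c : Fin e → A) (r s t u : Fin e → Fin n),
    (∀ k, Homog P (a k)) → (∀ k, Homog P (c k)) →
    X a r s * X c t u
      = if s = t then ((-1 : ℤ) ^ koz P.od a c) • X (fun k => a k * c k) r u else 0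
  act : ∀ {e : ℕ}, Equiv.Perm (Fin e) → T e →ₗ[𝕜] T e
  act_act : ∀ {e : ℕ} (σ τ : Equiv.Perm (Fin e)) (x : T e), act τ (act σ x) = act (σ * τ) x
  act_mul : ∀ {e : ℕ} (σ : Equiv.Perm (Fin e)) (x y : T e), act σ (x * y) = act σ x * act σ y
  act_X : ∀ {e : ℕ} (σ : Equiv.Perm (Fin e)) (a : Fin e → A) (r s : Fin e → Fin n),
    (∀ k, Homog P (a k)) →
    act σ (X a r s) = ((-1 : ℤ) ^ sgnc P.od σ a) • X (a ∘ σ) (r ∘ σ) (s ∘ σ)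
  evT : ∀ e : ℕ, Submodule 𝕜 (T e)
  odT : ∀ e : ℕ, Submodule 𝕜 (T e)
  complT : ∀ e : ℕ, IsCompl (evT e) (odT e)
  X_mem_evT : ∀ {e : ℕ} (a : Fin e → A) (r s : Fin e → Fin n), (∀ k, Homog P (a k)) →
    Even (univ.filter fun k => a k ∈ P.od).card → X a r s ∈ evT e
  X_mem_odT : ∀ {e : ℕ} (a : Fin e → A) (r s : Fin e → Fin n), (∀ k, Homog P (a k)) →
    ¬ Even (univ.filter fun k => a k ∈ P.od).card → X a r s ∈ odT e
  star : ∀ {e f : ℕ}, T e →ₗ[𝕜] T f →ₗ[𝕜] T (e + f)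
  star_X : ∀ {e f : ℕ} (a : Fin e → A) (r s : Fin e → Fin n)
      (c : Fin f → A) (t u : Fin f → Fin n),
    star (X a r s) (X c t u)
      = ∑ σ ∈ univ.filter (IsShuffle e f),
          act σ (X (Fin.append a c) (Fin.append r t) (Fin.append s u))
  nab : ∀ e f : ℕ, T (e + f) →ₗ[𝕜] TensorProduct 𝕜 (T e) (T f)
  nab_X : ∀ (e f : ℕ) (a : Fin (e + f) → A) (r s : Fin (e + f) → Fin n),
    nab e f (X a r s)
      = (X (a ∘ Fin.castAdd f) (r ∘ Fin.castAdd f) (s ∘ Fin.castAdd f))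
          ⊗ₜ[𝕜] (X (a ∘ Fin.natAdd e) (r ∘ Fin.natAdd e) (s ∘ Fin.natAdd e))

variable {n : ℕ} {T : ℕ → Type} [∀ e, NonUnitalRing (T e)] [∀ e, Module 𝕜 (T e)]

/-- `ξ^𝐚_{𝐫,𝐬}`, the signed sum of the pure tensors over the `S_d`-orbit of `(𝐚,𝐫,𝐬)`. -/
def xiH {P : GoodPair 𝕜 A β} (D : Tower 𝕜 A β n T P) (ord : LinearOrder (A × Fin n × Fin n))
    {d : ℕ} (a : Fin d → A) (r s : Fin d → Fin n) : T d :=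
  ∑ w ∈ (univ.image fun σ : Equiv.Perm (Fin d) => (a ∘ σ, r ∘ σ, s ∘ σ)),
    ((-1 : ℤ) ^ (ang P.od ord a r s + ang P.od ord w.1 w.2.1 w.2.2)) • D.X w.1 w.2.1 w.2.2

/-- `ξ^𝐛_{𝐫,𝐬}` for a word `𝐛` of basis elements. -/
def xiB {P : GoodPair 𝕜 A β} (D : Tower 𝕜 A β n T P) (ord : LinearOrder (A × Fin n × Fin n))
    {d : ℕ} (b : Fin d → β) (r s : Fin d → Fin n) : T d :=
  xiH D ord (fun k => P.bas (b k)) r s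

/-- `[𝐛,𝐫,𝐬]^b_{r,s}`, the multiplicity of an entry triple in a word triple. -/
def mco {n d : ℕ} (b : Fin d → β) (r s : Fin d → Fin n) (w : β × Fin n × Fin n) : ℕ :=
  (univ.filter fun k => ((b k, r k, s k) : β × Fin n × Fin n) = w).card

/-- `∏ ([𝐛,𝐫,𝐬]^b_{r,s})!` over the entry triples whose basis element satisfies `sel`
(e.g. `sel i = (part i = 1)` gives `[𝐛,𝐫,𝐬]^!_𝔠`). -/
def facSel (sel : β → Prop) {n d : ℕ} (b : Fin d → β) (r s : Fin d → Fin n) : ℕ :=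
  ∏ w ∈ ((univ.image fun k => ((b k, r k, s k) : β × Fin n × Fin n)).filter fun w => sel w.1),
    Nat.factorial (mco b r s w)

/-- `η^𝐛_{𝐫,𝐬} := [𝐛,𝐫,𝐬]^!_𝔠 • ξ^𝐛_{𝐫,𝐬}`. -/
def eta {P : GoodPair 𝕜 A β} (D : Tower 𝕜 A β n T P) (ord : LinearOrder (A × Fin n × Fin n))
    {d : ℕ} (b : Fin d → β) (r s : Fin d → Fin n) : T d :=
  facSel (fun i => P.part i = 1) b r s • xiB D ord b r s

/-- `S^A(n,d) = (M_n(A)^{⊗d})^{S_d}`, the invariants. -/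
def SchurS {P : GoodPair 𝕜 A β} (D : Tower 𝕜 A β n T P) (d : ℕ) : Submodule 𝕜 (T d) where
  carrier := {x | ∀ σ : Equiv.Perm (Fin d), D.act σ x = x}
  add_mem' := by
    intro x y hx hy σ
    rw [map_add, hx σ, hy σ]
  zero_mem' := by
    intro σ; exact map_zero _
  smul_mem' := by
    intro c x hx σ
    rw [map_smul, hx σ]

/-- The generalized Schur algebra `T^A_𝔞(n,d)`, the `𝕜`-span of the `η^𝐛_{𝐫,𝐬}`,
`(𝐛,𝐫,𝐬) ∈ Tri^B(n,d)`. -/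
def SchurT {P : GoodPair 𝕜 A β} (D : Tower 𝕜 A β n T P) (ord : LinearOrder (A × Fin n × Fin n))
    (d : ℕ) : Submodule 𝕜 (T d) :=
  Submodule.span 𝕜 {x | ∃ b r s, IsTriB P b r s ∧ x = eta D ord b r s}

/-- `S^𝔞(n,d) = (M_n(𝔞)^{⊗d})^{S_d} ⊆ S^A(n,d)`. -/
def SchurA {P : GoodPair 𝕜 A β} (D : Tower 𝕜 A β n T P) (d : ℕ) : Submodule 𝕜 (T d) :=
  Submodule.span 𝕜 {x | ∃ a r s, (∀ k, a k ∈ P.aa) ∧ x = D.X a r s} ⊓ SchurS D d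

/-- `ξ^f = E^f ⊗ ⋯ ⊗ E^f` for `f ∈ A`. -/
def xiIdem {P : GoodPair 𝕜 A β} (D : Tower 𝕜 A β n T P) (f : A) (d : ℕ) : T d :=
  ∑ r : Fin d → Fin n, D.X (fun _ => f) r r

/-- Transport along an equality of degrees. -/
def tcast {e f : ℕ} (h : e = f) : T e ≃ₗ[𝕜] T f := by
  subst h; exact LinearEquiv.refl 𝕜 (T e)

/-- Iterated `*`-product `x_1 * x_2 * ⋯ * x_d` of degree-one pure tensors read off from a
word (associated to the left). -/
def starIter {P : GoodPair 𝕜 A β} (D : Tower 𝕜 A β n T P) :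
    ∀ (e : ℕ), (Fin e → A) → (Fin e → Fin n) → (Fin e → Fin n) → T e
  | 0, _, _, _ => D.X Fin.elim0 Fin.elim0 Fin.elim0
  | (e + 1), a, r, s =>
      D.star (starIter D e (a ∘ Fin.castSucc) (r ∘ Fin.castSucc) (s ∘ Fin.castSucc))
        (D.X (fun _ : Fin 1 => a (Fin.last e)) (fun _ => r (Fin.last e)) (fun _ => s (Fin.last e)))

/-- Iterated `*`-product of blockwise given elements. -/
def starBlocks {P : GoodPair 𝕜 A β} (D : Tower 𝕜 A β n T P) :
    ∀ (q : ℕ) (sz : Fin q → ℕ), (∀ m, T (sz m)) → T (∑ m, sz m)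
  | 0, sz, _ => cast (congrArg T (Fin.sum_univ_zero sz).symm) (D.X Fin.elim0 Fin.elim0 Fin.elim0)
  | (q + 1), sz, x =>
      cast (congrArg T (Fin.sum_univ_castSucc sz).symm)
        (D.star (starBlocks D q (fun m => sz m.castSucc) (fun m => x m.castSucc))
          (x (Fin.last q)))

/-- Concatenation of a tuple of words of lengths `sz 0, …, sz (q-1)`. -/
def concatB {α : Type} : ∀ {q : ℕ} (sz : Fin q → ℕ), (∀ m, Fin (sz m) → α) → Fin (∑ m, sz m) → α
  | 0, sz, _ => fun k => Fin.elim0 (cast (congrArg Fin (Fin.sum_univ_zero sz)) k)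
  | (q + 1), sz, f => fun k =>
      Fin.append (concatB (fun m => sz m.castSucc) (fun m => f m.castSucc)) (f (Fin.last q))
        (cast (congrArg Fin (Fin.sum_univ_castSucc sz)) k)

/-- A triple of words `(𝐛,𝐫,𝐬)`. -/
abbrev WordTriple (β : Type) (n d : ℕ) : Type :=
  (Fin d → β) × (Fin d → Fin n) × (Fin d → Fin n)

/-- The diagonal right place-permutation action on triples of words. -/
def wAct {d : ℕ} (w : WordTriple β n d) (σ : Equiv.Perm (Fin d)) : WordTriple β n d :=
  (w.1 ∘ σ, w.2.1 ∘ σ, w.2.2 ∘ σ)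

/-- The `k`-th entry triple `(b_k, r_k, s_k)` (with `b_k` realized in `A`). -/
def entryAt (P : GoodPair 𝕜 A β) {n d : ℕ} (w : WordTriple β n d) (k : Fin d) :
    A × Fin n × Fin n :=
  (P.bas (w.1 k), w.2.1 k, w.2.2 k)

/-- The lexicographic order on triples of words induced by the total order `ord`. -/
def wordLE (P : GoodPair 𝕜 A β) {n : ℕ} (ord : LinearOrder (A × Fin n × Fin n)) {d : ℕ}
    (w w' : WordTriple β n d) : Prop :=
  (∀ k, entryAt P w k = entryAt P w' k) ∨
    ∃ l : Fin d, (∀ k, k < l → entryAt P w k = entryAt P w' k) ∧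
      ord.lt (entryAt P w l) (entryAt P w' l)

/-- `Tri^B_0(n,d)`: the lexicographically minimal representatives of the `S_d`-orbits on
`Tri^B(n,d)`. -/
def IsTri0 (P : GoodPair 𝕜 A β) {n : ℕ} (ord : LinearOrder (A × Fin n × Fin n)) {d : ℕ}
    (w : WordTriple β n d) : Prop :=
  IsTriB P w.1 w.2.1 w.2.2 ∧ ∀ σ : Equiv.Perm (Fin d), wordLE P ord w (wAct w σ)

/-- The first `l` letters of each word. -/
def firstW {d : ℕ} (l : ℕ) (hl : l ≤ d) (w : WordTriple β n d) : WordTriple β n l :=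
  (fun k => w.1 ⟨k, lt_of_lt_of_le k.isLt hl⟩,
   fun k => w.2.1 ⟨k, lt_of_lt_of_le k.isLt hl⟩,
   fun k => w.2.2 ⟨k, lt_of_lt_of_le k.isLt hl⟩)

/-- The last `d - l` letters of each word. -/
def lastW {d : ℕ} (l : ℕ) (hl : l ≤ d) (w : WordTriple β n d) : WordTriple β n (d - l) :=
  (fun k => w.1 ⟨l + (k : ℕ), by have := k.isLt; omega⟩,
   fun k => w.2.1 ⟨l + (k : ℕ), by have := k.isLt; omega⟩,
   fun k => w.2.2 ⟨l + (k : ℕ), by have := k.isLt; omega⟩)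

/-- Concatenation of words. -/
def appF {α : Type} {d : ℕ} (l : ℕ) (hl : l ≤ d) (f : Fin l → α) (g : Fin (d - l) → α) :
    Fin d → α :=
  fun k => if hk : (k : ℕ) < l then f ⟨k, hk⟩ else g ⟨(k : ℕ) - l, by have := k.isLt; omega⟩

/-- Concatenation `T¹T²` of two triples of words. -/
def concatW {d : ℕ} (l : ℕ) (hl : l ≤ d) (p : WordTriple β n l × WordTriple β n (d - l)) :
    WordTriple β n d :=
  (appF l hl p.1.1 p.2.1, appF l hl p.1.2.1 p.2.2.1, appF l hl p.1.2.2 p.2.2.2)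

/-- `Spl_l(T)`, the set of `l`-splits of `T ∈ Tri^B_0(n,d)`. -/
def splitsF (P : GoodPair 𝕜 A β) {n : ℕ} (ord : LinearOrder (A × Fin n × Fin n)) {d : ℕ}
    (l : ℕ) (hl : l ≤ d) (w : WordTriple β n d) :
    Finset (WordTriple β n l × WordTriple β n (d - l)) :=
  (univ.image fun σ : Equiv.Perm (Fin d) =>
      (firstW l hl (wAct w σ), lastW l hl (wAct w σ))).filter
    fun p => IsTri0 P ord p.1 ∧ IsTri0 P ord p.2

/-- The number of inversions (= Coxeter length) of a permutation. -/
def invCount {d : ℕ} (σ : Equiv.Perm (Fin d)) : ℕ :=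
  (univ.filter fun kl : Fin d × Fin d => kl.1 < kl.2 ∧ σ kl.2 < σ kl.1).card

/-- The submodule `{x | x·ε = x}` (for an idempotent `ε` this is `R·ε`). -/
def rfix (𝕜 : Type) {R : Type} [CommRing 𝕜] [NonUnitalRing R] [Module 𝕜 R]
    [IsScalarTower 𝕜 R R] (ε : R) : Submodule 𝕜 R where
  carrier := {x | x * ε = x}
  add_mem' := by
    intro x y hx hy
    simp only [Set.mem_setOf_eq] at *
    rw [add_mul, hx, hy]
  zero_mem' := by simp
  smul_mem' := by
    intro c x hx
    simp only [Set.mem_setOf_eq] at *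
    rw [smul_mul_assoc, hx]

/-- Right `εSε`-module endomorphism property for a map of `S·ε = M ⊓ rfix ε`,
where `S` is the (possibly non-unital) algebra realized as the submodule `M` of `R`. -/
def IsEquivar (𝕜 : Type) {R : Type} [CommRing 𝕜] [NonUnitalRing R] [Module 𝕜 R]
    [IsScalarTower 𝕜 R R] (M : Submodule 𝕜 R) (ε : R)
    (f : ↥(M ⊓ rfix 𝕜 ε) →ₗ[𝕜] ↥(M ⊓ rfix 𝕜 ε)) : Prop :=
  ∀ (x : ↥(M ⊓ rfix 𝕜 ε)) (c : R), c ∈ M → ε * c * ε = c →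
    ∀ h : (x : R) * c ∈ M ⊓ rfix 𝕜 ε,
      ((f ⟨(x : R) * c, h⟩ : ↥(M ⊓ rfix 𝕜 ε)) : R) = (f x : R) * c

/-- `ε` is a *double centralizer idempotent* for the algebra `M ⊆ R`: the left
multiplication map `λ : M → End_{εMε}(Mε)` is bijective. -/
def IsDCI (𝕜 : Type) {R : Type} [CommRing 𝕜] [NonUnitalRing R] [Module 𝕜 R]
    [IsScalarTower 𝕜 R R] (M : Submodule 𝕜 R) (ε : R) : Prop :=
  (∀ s ∈ M, ∀ s' ∈ M, (∀ x ∈ M ⊓ rfix 𝕜 ε, s * x = s' * x) → s = s') ∧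
  (∀ f : ↥(M ⊓ rfix 𝕜 ε) →ₗ[𝕜] ↥(M ⊓ rfix 𝕜 ε), IsEquivar 𝕜 M ε f →
    ∃ s ∈ M, ∀ x : ↥(M ⊓ rfix 𝕜 ε), (f x : R) = s * (x : R))

/-! ### Auxiliary material for the proof -/

lemma aux_sign_parity {d : ℕ} (o : Fin d → Prop) (g : Fin d → Fin d → Prop)
    (hg : ∀ i j, i ≠ j → o i → o j → (g i j ↔ ¬ g j i)) (σ : Equiv.Perm (Fin d)) :
    Even ((univ.filter fun kl : Fin d × Fin d =>
        kl.1 < kl.2 ∧ σ⁻¹ kl.2 < σ⁻¹ kl.1 ∧ o kl.1 ∧ o kl.2).card +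
      ((univ.filter fun kl : Fin d × Fin d =>
        kl.1 < kl.2 ∧ o kl.1 ∧ o kl.2 ∧ g kl.1 kl.2).card +
      (univ.filter fun kl : Fin d × Fin d =>
        kl.1 < kl.2 ∧ o (σ kl.1) ∧ o (σ kl.2) ∧ g (σ kl.1) (σ kl.2)).card)) := by
  have hi1 : ∀ k, σ⁻¹ (σ k) = k := fun k => σ.symm_apply_apply k
  have hi2 : ∀ k, σ (σ⁻¹ k) = k := fun k => σ.apply_symm_apply k
  have h3 : (univ.filter fun kl : Fin d × Fin d =>
        kl.1 < kl.2 ∧ o (σ kl.1) ∧ o (σ kl.2) ∧ g (σ kl.1) (σ kl.2)).card =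
      (univ.filter fun kl : Fin d × Fin d =>
        kl.1 < kl.2 ∧ o kl.1 ∧ o kl.2 ∧ ¬ (g kl.1 kl.2 ↔ σ⁻¹ kl.2 < σ⁻¹ kl.1)).card := by
    refine Finset.card_nbij'
      (fun kl => if σ kl.1 < σ kl.2 then (σ kl.1, σ kl.2) else (σ kl.2, σ kl.1))
      (fun kl => if σ⁻¹ kl.1 < σ⁻¹ kl.2 then (σ⁻¹ kl.1, σ⁻¹ kl.2) else (σ⁻¹ kl.2, σ⁻¹ kl.1))
      ?_ ?_ ?_ ?_
    · rintro ⟨k, l⟩ h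
      simp only [coe_filter, mem_univ, true_and, Set.mem_ofPred_eq] at h ⊢
      obtain ⟨h1, h2, h3, h4⟩ := h
      have hne : σ k ≠ σ l := fun h => h1.ne (σ.injective h)
      split_ifs with hs
      · simp only [hi1]
        refine ⟨hs, h2, h3, ?_⟩
        simp [h4, h1.le]
      · simp only [hi1]
        refine ⟨lt_of_le_of_ne (not_lt.1 hs) hne.symm, h3, h2, ?_⟩
        have := (hg _ _ hne h2 h3).1 h4
        simp [this, h1]
    · rintro ⟨i, j⟩ h
      simp only [coe_filter, mem_univ, true_and, Set.mem_ofPred_eq] at h ⊢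
      obtain ⟨h1, h2, h3, h4⟩ := h
      have hne : σ⁻¹ i ≠ σ⁻¹ j := fun h => h1.ne (σ⁻¹.injective h)
      split_ifs with hs
      · simp only [hi2]
        refine ⟨hs, h2, h3, ?_⟩
        have := hs.not_gt
        tauto
      · simp only [hi2]
        have h5 : σ⁻¹ j < σ⁻¹ i := lt_of_le_of_ne (not_lt.1 hs) hne.symm
        refine ⟨h5, h3, h2, ?_⟩
        have := hg _ _ h1.ne h2 h3
        tauto
    · rintro ⟨k, l⟩ h
      simp only [coe_filter, mem_univ, true_and, Set.mem_ofPred_eq] at h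
      dsimp only
      split_ifs with hs h' h'
      · simp
      · simp at h'; exact absurd h.1 (not_lt.2 h')
      · simp at h'; exact absurd h.1 h'.not_gt
      · simp
    · rintro ⟨k, l⟩ h
      simp only [coe_filter, mem_univ, true_and, Set.mem_ofPred_eq] at h
      dsimp only
      split_ifs with hs h' h'
      · simp
      · simp at h'; exact absurd h.1 (not_lt.2 h')
      · simp at h'; exact absurd h.1 h'.not_gt
      · simp
  rw [h3]
  simp only [Finset.card_filter, ← Finset.sum_add_distrib]
  refine Finset.even_sum _ fun kl _ => ?_
  by_cases h1 : kl.1 < kl.2 <;> by_cases h2 : o kl.1 <;> by_cases h3 : o kl.2 <;>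
    by_cases h4 : g kl.1 kl.2 <;> by_cases h5 : σ⁻¹ kl.2 < σ⁻¹ kl.1 <;>
    simp only [h1, h2, h3, h4, h5] <;> decide

lemma aux_swap_odd {d : ℕ} (o : Fin d → Prop) (k l : Fin d) (hkl : k < l) (hk : o k) (hl : o l) :
    Odd (univ.filter fun ij : Fin d × Fin d =>
        ij.1 < ij.2 ∧ (Equiv.swap k l)⁻¹ ij.2 < (Equiv.swap k l)⁻¹ ij.1 ∧ o ij.1 ∧ o ij.2).card := by
  set τ := Equiv.swap k l with hτ
  have ho : ∀ i, o (τ i) ↔ o i := by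
    intro i
    by_cases h1 : i = k
    · subst h1; simp [hτ, hk, hl]
    by_cases h2 : i = l
    · subst h2; simp [hτ, hk, hl]
    · rw [hτ, Equiv.swap_apply_of_ne_of_ne h1 h2]
  have hinv : τ⁻¹ = τ := Equiv.swap_inv k l
  have hττ : ∀ i, τ (τ i) = i := fun i => Equiv.swap_apply_self k l i
  rw [hinv]
  set S := univ.filter fun ij : Fin d × Fin d =>
        ij.1 < ij.2 ∧ τ ij.2 < τ ij.1 ∧ o ij.1 ∧ o ij.2 with hS
  have hmem : (k, l) ∈ S := by simp [hS, hτ, hkl, hk, hl]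
  have hfix : ∀ ij ∈ S, τ ij.2 = ij.1 → ij = (k, l) := by
    rintro ⟨i, j⟩ h h'
    simp only [hS, mem_filter, mem_univ, true_and] at h h'
    by_cases h1 : j = k
    · subst h1
      rw [hτ, Equiv.swap_apply_left] at h'
      subst h'
      exact absurd h.1 hkl.not_gt
    by_cases h2 : j = l
    · subst h2
      rw [hτ, Equiv.swap_apply_right] at h'
      rw [h']
    · rw [hτ, Equiv.swap_apply_of_ne_of_ne h1 h2] at h'
      exact absurd h' h.1.ne'
  have hsum : ∑ _x ∈ S.erase (k, l), (1 : ZMod 2) = 0 := by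
    refine Finset.sum_involution (fun ij _ => (τ ij.2, τ ij.1)) ?_ ?_ ?_ ?_
    · intros; decide
    · rintro ⟨i, j⟩ h _ h'
      rw [Finset.mem_erase] at h
      exact h.1 (hfix _ h.2 (congrArg Prod.fst h'))
    · rintro ⟨i, j⟩ h
      rw [Finset.mem_erase] at h ⊢
      have h2 := h.2
      simp only [hS, mem_filter, mem_univ, true_and] at h2
      refine ⟨fun h' => h.1 ?_, ?_⟩
      · apply hfix _ h.2
        have e1 : τ j = k := congrArg Prod.fst h'
        have e2 : τ i = l := congrArg Prod.snd h'
        have e3 : i = k := by rw [← hττ i, e2, hτ, Equiv.swap_apply_right]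
        simp only [e1, e3]
      · simp only [hS, mem_filter, mem_univ, true_and, hττ, ho]
        tauto
    · rintro ⟨i, j⟩ h
      simp only [hττ]
  have heven : Even (S.erase (k, l)).card := by
    rw [Finset.sum_const, nsmul_eq_mul, mul_one] at hsum
    exact (ZMod.natCast_eq_zero_iff_even).1 hsum
  rw [← Finset.card_erase_add_one hmem]
  exact heven.add_one

section aux

variable (P : GoodPair 𝕜 A β)

lemma aux_odd [Nontrivial 𝕜] (i : β) : P.bas i ∈ P.od ↔ P.part i = 2 := by
  refine ⟨fun h => ?_, P.bas_mem_od i⟩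
  by_contra h2
  have hev : P.bas i ∈ P.ev := by
    rw [← P.aa_sup_cc]
    have : P.part i = 0 ∨ P.part i = 1 := by
      generalize P.part i = x at h2
      revert h2; revert x; decide
    rcases this with h | h
    · exact Submodule.mem_sup_left (P.bas_mem_aa i h)
    · exact Submodule.mem_sup_right (P.bas_mem_cc i h)
  exact P.bas.ne_zero i (Submodule.disjoint_def.1 P.compl.disjoint _ hev h)

lemma aux_homog (i : β) : Homog P (P.bas i) := by
  by_cases h2 : P.part i = 2
  · exact Or.inr (P.bas_mem_od i h2)
  · left
    rw [← P.aa_sup_cc]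
    have : P.part i = 0 ∨ P.part i = 1 := by
      generalize P.part i = x at h2
      revert h2; revert x; decide
    rcases this with h | h
    · exact Submodule.mem_sup_left (P.bas_mem_aa i h)
    · exact Submodule.mem_sup_right (P.bas_mem_cc i h)

/-- `ang` of a word triple in the basis. -/
def auxAng (ord : LinearOrder (A × Fin n × Fin n)) {d : ℕ} (w : WordTriple β n d) : ℕ :=
  ang P.od ord (fun k => P.bas (w.1 k)) w.2.1 w.2.2

/-- `sgnc` of a word triple in the basis. -/
def auxSg {d : ℕ} (σ : Equiv.Perm (Fin d)) (w : WordTriple β n d) : ℕ :=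
  sgnc P.od σ (fun k => P.bas (w.1 k))

/-- The orbit of a word triple. -/
def auxOrb {d : ℕ} (w : WordTriple β n d) : Finset (WordTriple β n d) :=
  univ.image fun σ : Equiv.Perm (Fin d) => wAct w σ

lemma aux_wAct_wAct {d : ℕ} (w : WordTriple β n d) (σ τ : Equiv.Perm (Fin d)) :
    wAct (wAct w σ) τ = wAct w (σ * τ) := rfl

lemma aux_wAct_one {d : ℕ} (w : WordTriple β n d) : wAct w 1 = w := rfl

lemma aux_mem_orb {d : ℕ} {w v : WordTriple β n d} : v ∈ auxOrb w ↔ ∃ σ, wAct w σ = v := by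
  simp [auxOrb]

lemma aux_self_mem {d : ℕ} (w : WordTriple β n d) : w ∈ auxOrb w :=
  aux_mem_orb.2 ⟨1, rfl⟩

lemma aux_orb_symm {d : ℕ} {w v : WordTriple β n d} (h : v ∈ auxOrb w) : w ∈ auxOrb v := by
  obtain ⟨σ, rfl⟩ := aux_mem_orb.1 h
  exact aux_mem_orb.2 ⟨σ⁻¹, by rw [aux_wAct_wAct, mul_inv_cancel, aux_wAct_one]⟩

lemma aux_orb_trans {d : ℕ} {u w v : WordTriple β n d} (h : v ∈ auxOrb w) (h' : u ∈ auxOrb v) :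
    u ∈ auxOrb w := by
  obtain ⟨σ, rfl⟩ := aux_mem_orb.1 h
  obtain ⟨τ, rfl⟩ := aux_mem_orb.1 h'
  exact aux_mem_orb.2 ⟨σ * τ, rfl⟩

lemma aux_orb_eq {d : ℕ} {w v : WordTriple β n d} (h : v ∈ auxOrb w) : auxOrb v = auxOrb w := by
  ext u
  exact ⟨fun h' => aux_orb_trans h h', fun h' => aux_orb_trans (aux_orb_symm h) h'⟩

variable {P} in
lemma aux_tri_act {d : ℕ} {w : WordTriple β n d} (h : IsTriB P w.1 w.2.1 w.2.2)
    (σ : Equiv.Perm (Fin d)) :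
    IsTriB P (wAct w σ).1 (wAct w σ).2.1 (wAct w σ).2.2 := by
  intro k l hkl he
  exact h (σ k) (σ l) (fun h => hkl (σ.injective h)) he

variable {P} in
lemma aux_tri_orb {d : ℕ} {w v : WordTriple β n d} (h : IsTriB P w.1 w.2.1 w.2.2)
    (hv : v ∈ auxOrb w) : IsTriB P v.1 v.2.1 v.2.2 := by
  obtain ⟨σ, rfl⟩ := aux_mem_orb.1 hv
  exact aux_tri_act h σ

lemma aux_parity [Nontrivial 𝕜] (ord : LinearOrder (A × Fin n × Fin n)) {d : ℕ}
    {w : WordTriple β n d} (h : IsTriB P w.1 w.2.1 w.2.2) (σ : Equiv.Perm (Fin d)) :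
    Even (auxSg P σ w + (auxAng P ord w + auxAng P ord (wAct w σ))) := by
  have := aux_sign_parity (fun k => P.bas (w.1 k) ∈ P.od)
    (fun i j => ord.lt (P.bas (w.1 j), w.2.1 j, w.2.2 j) (P.bas (w.1 i), w.2.1 i, w.2.2 i))
    (by
      intro i j hij hi hj
      have hne : ((P.bas (w.1 j), w.2.1 j, w.2.2 j) : A × Fin n × Fin n) ≠
          (P.bas (w.1 i), w.2.1 i, w.2.2 i) := by
        intro he
        simp only [Prod.mk.injEq] at he
        refine h i j hij ?_ ((aux_odd P _).1 hi)
        rw [P.bas.injective he.1, he.2.1, he.2.2]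
      constructor
      · intro h1
        exact @lt_asymm _ ord.toPreorder _ _ h1
      · intro h1
        exact (@lt_or_gt_of_ne _ ord _ _ hne).resolve_right h1) σ
  have h3 : auxAng P ord (wAct w σ) = (univ.filter fun kl : Fin d × Fin d =>
      kl.1 < kl.2 ∧ P.bas (w.1 (σ kl.1)) ∈ P.od ∧ P.bas (w.1 (σ kl.2)) ∈ P.od ∧
        ord.lt (P.bas (w.1 (σ kl.2)), w.2.1 (σ kl.2), w.2.2 (σ kl.2))
          (P.bas (w.1 (σ kl.1)), w.2.1 (σ kl.1), w.2.2 (σ kl.1))).card := by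
    unfold auxAng ang
    congr 1
  rw [h3]
  unfold auxSg auxAng sgnc ang
  convert this

variable {P}
variable (D : Tower 𝕜 A β n T P) (ord : LinearOrder (A × Fin n × Fin n))

lemma aux_zs {d : ℕ} (m : ℕ) (x : T d) : ((-1 : ℤ) ^ m) • x = ((-1 : 𝕜) ^ m) • x := by
  rw [← Int.cast_smul_eq_zsmul 𝕜]; simp

lemma aux_act_bas {d : ℕ} (σ : Equiv.Perm (Fin d)) (w : WordTriple β n d) :
    D.act σ (D.bas d w) = ((-1 : 𝕜) ^ auxSg P σ w) • D.bas d (wAct w σ) := by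
  obtain ⟨b, r, s⟩ := w
  rw [D.bas_eq, D.act_X _ _ _ _ (fun k => aux_homog P _), aux_zs (𝕜 := 𝕜)]
  simp only [wAct, D.bas_eq]
  rfl

lemma aux_xi [Nontrivial 𝕜] {d : ℕ} (w : WordTriple β n d) :
    xiB D ord w.1 w.2.1 w.2.2 =
      ∑ v ∈ auxOrb w, ((-1 : 𝕜) ^ (auxAng P ord w + auxAng P ord v)) • D.bas d v := by
  have himg : (univ.image fun σ : Equiv.Perm (Fin d) =>
      ((fun k => P.bas (w.1 k)) ∘ σ, w.2.1 ∘ σ, w.2.2 ∘ σ)) =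
      (auxOrb w).image fun v => ((fun k => P.bas (v.1 k)), v.2.1, v.2.2) := by
    rw [auxOrb, Finset.image_image]
    rfl
  unfold xiB xiH
  rw [himg, Finset.sum_image]
  · refine Finset.sum_congr rfl fun v _ => ?_
    obtain ⟨b, r, s⟩ := v
    rw [aux_zs (𝕜 := 𝕜), D.bas_eq]
    rfl
  · rintro ⟨b, r, s⟩ _ ⟨b', r', s'⟩ _ he
    simp only [Prod.mk.injEq] at he
    obtain ⟨h1, h2, h3⟩ := he
    have : b = b' := funext fun k => P.bas.injective (congrFun h1 k)
    rw [this, h2, h3]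

lemma aux_xi_repr [Nontrivial 𝕜] {d : ℕ} (w v : WordTriple β n d) :
    (D.bas d).repr (xiB D ord w.1 w.2.1 w.2.2) v =
      if v ∈ auxOrb w then (-1 : 𝕜) ^ (auxAng P ord w + auxAng P ord v) else 0 := by
  rw [aux_xi, map_sum, Finset.sum_apply']
  simp [Finsupp.single_apply]

lemma aux_xi_orb [Nontrivial 𝕜] {d : ℕ} {w v : WordTriple β n d} (h : v ∈ auxOrb w) :
    xiB D ord v.1 v.2.1 v.2.2 =
      ((-1 : 𝕜) ^ (auxAng P ord v + auxAng P ord w)) • xiB D ord w.1 w.2.1 w.2.2 := by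
  rw [aux_xi, aux_xi, aux_orb_eq h, Finset.smul_sum]
  refine Finset.sum_congr rfl fun u _ => ?_
  rw [smul_smul, ← pow_add (-1 : 𝕜) (auxAng P ord v + auxAng P ord w)]
  congr 1
  have e : auxAng P ord v + auxAng P ord w + (auxAng P ord w + auxAng P ord u) =
    auxAng P ord v + auxAng P ord u + 2 * auxAng P ord w := by ring
  rw [e, pow_add _ _ (2 * _), pow_mul]; simp

lemma aux_xi_inv [Nontrivial 𝕜] {d : ℕ} {w : WordTriple β n d}
    (h : IsTriB P w.1 w.2.1 w.2.2) : xiB D ord w.1 w.2.1 w.2.2 ∈ SchurS D d := by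
  intro σ
  rw [aux_xi, map_sum]
  refine Finset.sum_bij (fun v _ => wAct v σ) ?_ ?_ ?_ ?_
  · intro v hv
    exact aux_orb_trans hv (aux_mem_orb.2 ⟨σ, rfl⟩)
  · intro v _ u _ he
    have := congrArg (fun x => wAct x σ⁻¹) he
    simpa only [aux_wAct_wAct, mul_inv_cancel, aux_wAct_one] using this
  · intro v hv
    refine ⟨wAct v σ⁻¹, aux_orb_trans hv (aux_mem_orb.2 ⟨σ⁻¹, rfl⟩), ?_⟩
    rw [aux_wAct_wAct, inv_mul_cancel, aux_wAct_one]
  · intro v hv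
    rw [map_smul, aux_act_bas, smul_smul, ← pow_add]
    congr 1
    have hp := aux_parity P ord (aux_tri_orb h hv) σ
    rw [neg_one_pow_congr (n := auxAng P ord w + auxAng P ord (wAct v σ))]
    grind

lemma aux_inv_coeff {d : ℕ} {x : T d} (hx : x ∈ SchurS D d)
    (σ : Equiv.Perm (Fin d)) (w : WordTriple β n d) :
    (D.bas d).repr x (wAct w σ) = ((-1 : 𝕜) ^ auxSg P σ w) * (D.bas d).repr x w := by
  have key : ∀ y : T d, (D.bas d).repr (D.act σ y) (wAct w σ) =
      ((-1 : 𝕜) ^ auxSg P σ w) * (D.bas d).repr y w := by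
    have hlin : (Finsupp.lapply (wAct w σ) : _ →ₗ[𝕜] 𝕜) ∘ₗ (D.bas d).repr.toLinearMap ∘ₗ D.act σ =
        ((-1 : 𝕜) ^ auxSg P σ w) • ((Finsupp.lapply w : _ →ₗ[𝕜] 𝕜) ∘ₗ (D.bas d).repr.toLinearMap) := by
      refine (D.bas d).ext fun v => ?_
      simp only [LinearMap.comp_apply, LinearMap.smul_apply, LinearEquiv.coe_coe,
        Finsupp.lapply_apply, smul_eq_mul]
      rw [aux_act_bas]
      by_cases hvw : v = w
      · subst hvw; simp
      · have : wAct v σ ≠ wAct w σ := by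
          intro he
          have := congrArg (fun x => wAct x σ⁻¹) he
          simp only [aux_wAct_wAct, mul_inv_cancel, aux_wAct_one] at this
          exact hvw this
        simp [Finsupp.single_apply, this, hvw]
    intro y
    exact LinearMap.congr_fun hlin y
  rw [← key, hx σ]

lemma aux_inv_zero [IsDomain 𝕜] [CharZero 𝕜] {d : ℕ} {x : T d} (hx : x ∈ SchurS D d)
    (w : WordTriple β n d) (hw : ¬ IsTriB P w.1 w.2.1 w.2.2) : (D.bas d).repr x w = 0 := by
  have hex : ∃ k l : Fin d, k < l ∧
      ((w.1 k, w.2.1 k, w.2.2 k) : β × Fin n × Fin n) = (w.1 l, w.2.1 l, w.2.2 l) ∧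
      P.part (w.1 k) = 2 := by
    unfold IsTriB at hw
    push Not at hw
    obtain ⟨k, l, hkl, he, hp⟩ := hw
    rcases lt_or_gt_of_ne hkl with h | h
    · exact ⟨k, l, h, he, hp⟩
    · refine ⟨l, k, h, he.symm, ?_⟩
      have h3 : w.1 k = w.1 l := congrArg Prod.fst he
      rw [← hp, h3]
  obtain ⟨k, l, hkl, he, hp⟩ := hex
  simp only [Prod.mk.injEq] at he
  have hact : wAct w (Equiv.swap k l) = w := by
    have hg : ∀ {γ : Type} (f : Fin d → γ), f k = f l → f ∘ (Equiv.swap k l) = f := by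
      intro γ f hf
      funext i
      by_cases h1 : i = k
      · subst h1; simp [hf]
      by_cases h2 : i = l
      · subst h2; simp [hf]
      · simp [Equiv.swap_apply_of_ne_of_ne h1 h2]
    simp only [wAct, hg _ he.1, hg _ he.2.1, hg _ he.2.2]
  have h1 := aux_inv_coeff D hx (Equiv.swap k l) w
  have hodd : Odd (auxSg P (Equiv.swap k l) w) := by
    have := aux_swap_odd (fun i => P.bas (w.1 i) ∈ P.od) k l hkl
      (P.bas_mem_od _ hp) (P.bas_mem_od _ (he.1 ▸ hp))
    unfold auxSg sgnc
    convert this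
  rw [hact, hodd.neg_one_pow, neg_one_mul] at h1
  exact self_eq_neg.1 h1

lemma aux_mco_act {d : ℕ} (w : WordTriple β n d) (σ : Equiv.Perm (Fin d))
    (u : β × Fin n × Fin n) :
    mco (wAct w σ).1 (wAct w σ).2.1 (wAct w σ).2.2 u = mco w.1 w.2.1 w.2.2 u := by
  unfold mco
  refine Finset.card_bij (fun k _ => σ k) ?_ ?_ ?_
  · intro k hk
    rw [mem_filter] at hk ⊢
    exact ⟨mem_univ _, hk.2⟩
  · intro a _ b _ h
    exact σ.injective h
  · intro k hk
    rw [mem_filter] at hk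
    have hi : σ (σ⁻¹ k) = k := σ.apply_symm_apply k
    refine ⟨σ⁻¹ k, ?_, hi⟩
    rw [mem_filter]
    refine ⟨mem_univ _, ?_⟩
    simp only [wAct, Function.comp, hi]
    exact hk.2

lemma aux_fac_act (sel : β → Prop) {d : ℕ} (w : WordTriple β n d) (σ : Equiv.Perm (Fin d)) :
    facSel sel (wAct w σ).1 (wAct w σ).2.1 (wAct w σ).2.2 = facSel sel w.1 w.2.1 w.2.2 := by
  unfold facSel
  have himg : (univ.image fun k => (((wAct w σ).1 k, (wAct w σ).2.1 k, (wAct w σ).2.2 k) :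
      β × Fin n × Fin n)) = univ.image fun k => ((w.1 k, w.2.1 k, w.2.2 k) : β × Fin n × Fin n) := by
    ext u
    simp only [mem_image, mem_univ, true_and, wAct, Function.comp]
    exact (σ.surjective.exists
      (p := fun a => ((w.1 a, w.2.1 a, w.2.2 a) : β × Fin n × Fin n) = u)).symm
  rw [himg]
  exact Finset.prod_congr rfl fun u _ => by rw [aux_mco_act]

lemma aux_li [IsDomain 𝕜] {d : ℕ} (R : Set (WordTriple β n d))
    (hR : ∀ w ∈ R, ∀ v ∈ R, v ∈ auxOrb w → v = w) (c : R → 𝕜) (hc : ∀ w, c w ≠ 0) :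
    LinearIndependent 𝕜 (fun w : R => c w • xiB D ord (w : WordTriple β n d).1
        (w : WordTriple β n d).2.1 (w : WordTriple β n d).2.2) := by
  rw [linearIndependent_iff']
  intro s g hg i hi
  have h := congrArg (fun x => (D.bas d).repr x (i : WordTriple β n d)) hg
  simp only [map_sum, Finset.sum_apply', map_smul, Finsupp.smul_apply, aux_xi_repr, smul_eq_mul,
    map_zero, Finsupp.zero_apply] at h
  rw [Finset.sum_eq_single i] at h
  · rw [if_pos (aux_self_mem _)] at h
    have hs : ((-1 : 𝕜) ^ (auxAng P ord (i : WordTriple β n d) +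
        auxAng P ord (i : WordTriple β n d))) ≠ 0 :=
      pow_ne_zero _ (neg_ne_zero.2 one_ne_zero)
    exact (mul_eq_zero.1 h).resolve_right (mul_ne_zero (hc i) hs)
  · intro j _ hji
    rw [if_neg, mul_zero, mul_zero]
    intro hmem
    exact hji (Subtype.ext (hR _ j.2 _ i.2 hmem)).symm
  · intro h'; exact absurd hi h'

lemma aux_span [IsDomain 𝕜] [CharZero 𝕜] {d : ℕ} (R : Set (WordTriple β n d))
    (hR1 : ∀ w ∈ R, IsTriB P w.1 w.2.1 w.2.2)
    (hR : ∀ w ∈ R, ∀ v ∈ R, v ∈ auxOrb w → v = w)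
    (hR2 : ∀ w : WordTriple β n d, IsTriB P w.1 w.2.1 w.2.2 → ∃ w' ∈ R, w' ∈ auxOrb w)
    {x : T d} (hx : x ∈ SchurS D d) :
    x ∈ Submodule.span 𝕜 (Set.range fun w : R => xiB D ord (w : WordTriple β n d).1
        (w : WordTriple β n d).2.1 (w : WordTriple β n d).2.2) := by
  set c := (D.bas d).repr x with hc
  have hxe : x = ∑ w ∈ c.support.filter (· ∈ R), c w • xiB D ord w.1 w.2.1 w.2.2 := by
    apply (D.bas d).repr.injective
    ext v
    rw [map_sum, Finset.sum_apply']
    simp only [map_smul, Finsupp.smul_apply, aux_xi_repr, smul_eq_mul]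
    rw [← hc]
    by_cases hv : IsTriB P v.1 v.2.1 v.2.2
    · obtain ⟨w, hwR, hwv⟩ := hR2 v hv
      have hvw := aux_orb_symm hwv
      rw [Finset.sum_eq_single w]
      · rw [if_pos hvw]
        obtain ⟨σ, hσ⟩ := aux_mem_orb.1 hvw
        have h1 := aux_inv_coeff D hx σ w
        have hp := aux_parity P ord (hR1 w hwR) σ
        rw [hσ] at h1 hp
        rw [hc, h1, mul_comm]
        congr 1
        apply neg_one_pow_congr
        grind
      · intro u hu huw
        rw [if_neg, mul_zero]
        intro hvu
        exact huw (hR _ hwR _ (Finset.mem_filter.1 hu).2 (aux_orb_trans hvw (aux_orb_symm hvu)))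
      · intro hw
        rw [Finset.mem_filter] at hw
        have : c w = 0 := by
          by_contra h0
          exact hw ⟨Finsupp.mem_support_iff.2 h0, hwR⟩
        rw [this, zero_mul]
    · rw [hc, aux_inv_zero D hx v hv]
      symm
      refine Finset.sum_eq_zero fun w hw => ?_
      rw [if_neg, mul_zero]
      intro hvw
      exact hv (aux_tri_orb (hR1 w (Finset.mem_filter.1 hw).2) hvw)
  rw [hxe]
  refine Submodule.sum_mem _ fun w hw => Submodule.smul_mem _ _ (Submodule.subset_span ?_)
  exact ⟨⟨w, (Finset.mem_filter.1 hw).2⟩, rfl⟩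

end aux

/-- Choose one representative from each `S_d`-orbit on `Tri^B(n,d)`
(encoded by the set `R` of word triples with the hypotheses `hR1`, `hR2`).  Then the
corresponding elements `ξ^𝐛_{𝐫,𝐬}` form a `𝕜`-basis of the free `𝕜`-module `S^A(n,d)`
(they are linearly independent and span the invariants), and the corresponding elements
`η^𝐛_{𝐫,𝐬}` form a `𝕜`-basis of `T^A_𝔞(n,d)`. -/
theorem statement1 {𝕜 A β : Type} [CommRing 𝕜] [IsDomain 𝕜] [CharZero 𝕜]
    [NonUnitalRing A] [Module 𝕜 A] [SMulCommClass 𝕜 A A] [IsScalarTower 𝕜 A A]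
    {n : ℕ} (hn : 0 < n) {T : ℕ → Type} [∀ e, NonUnitalRing (T e)] [∀ e, Module 𝕜 (T e)]
    (P : GoodPair 𝕜 A β) (D : Tower 𝕜 A β n T P) (ord : LinearOrder (A × Fin n × Fin n))
    (d : ℕ) (R : Set (WordTriple β n d))
    (hR1 : ∀ w ∈ R, IsTriB P w.1 w.2.1 w.2.2)
    (hR2 : ∀ w : WordTriple β n d, IsTriB P w.1 w.2.1 w.2.2 →
      ∃! w' : WordTriple β n d, w' ∈ R ∧ ∃ σ : Equiv.Perm (Fin d), wAct w σ = w') :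
    (LinearIndependent 𝕜 (fun w : R => xiB D ord (w : WordTriple β n d).1
        (w : WordTriple β n d).2.1 (w : WordTriple β n d).2.2) ∧
      Submodule.span 𝕜 (Set.range fun w : R => xiB D ord (w : WordTriple β n d).1
        (w : WordTriple β n d).2.1 (w : WordTriple β n d).2.2) = SchurS D d) ∧
    (LinearIndependent 𝕜 (fun w : R => eta D ord (w : WordTriple β n d).1
        (w : WordTriple β n d).2.1 (w : WordTriple β n d).2.2) ∧
      Submodule.span 𝕜 (Set.range fun w : R => eta D ord (w : WordTriple β n d).1
        (w : WordTriple β n d).2.1 (w : WordTriple β n d).2.2) = SchurT D ord d) := by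
  have hRu : ∀ w ∈ R, ∀ v ∈ R, v ∈ auxOrb w → v = w := by
    intro w hw v hv h
    exact (hR2 w (hR1 w hw)).unique ⟨hv, aux_mem_orb.1 h⟩ ⟨hw, 1, rfl⟩
  have hRe : ∀ w : WordTriple β n d, IsTriB P w.1 w.2.1 w.2.2 → ∃ w' ∈ R, w' ∈ auxOrb w := by
    intro w hw
    obtain ⟨w', ⟨h1, h2⟩, _⟩ := hR2 w hw
    exact ⟨w', h1, aux_mem_orb.2 h2⟩
  refine ⟨⟨?_, ?_⟩, ?_, ?_⟩
  · simpa using aux_li D ord R hRu (fun _ => 1) (fun _ => one_ne_zero)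
  · apply le_antisymm
    · rw [Submodule.span_le]
      rintro _ ⟨w, rfl⟩
      exact aux_xi_inv D ord (hR1 w w.2)
    · intro x hx
      exact aux_span D ord R hR1 hRu hRe hx
  · have := aux_li D ord R hRu
      (fun w => ((facSel (fun i => P.part i = 1) (w : WordTriple β n d).1
        (w : WordTriple β n d).2.1 (w : WordTriple β n d).2.2 : ℕ) : 𝕜)) (by
        intro w
        rw [Nat.cast_ne_zero]
        exact Finset.prod_ne_zero_iff.2 fun u _ => Nat.factorial_ne_zero _)
    simp only [Nat.cast_smul_eq_nsmul] at this
    exact this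
  · apply le_antisymm
    · rw [Submodule.span_le]
      rintro _ ⟨w, rfl⟩
      exact Submodule.subset_span ⟨_, _, _, hR1 w w.2, rfl⟩
    · unfold SchurT
      rw [Submodule.span_le]
      rintro _ ⟨b, r, s, htri, rfl⟩
      obtain ⟨w, hwR, hw⟩ := hRe (b, r, s) htri
      have hx := aux_xi_orb D ord (aux_orb_symm hw)
      obtain ⟨σ, hσ⟩ := aux_mem_orb.1 hw
      have hf := aux_fac_act (fun i => P.part i = 1) (b, r, s) σ
      rw [hσ] at hf
      have he : eta D ord b r s =
          ((-1 : 𝕜) ^ (auxAng P ord (b, r, s) + auxAng P ord w)) • eta D ord w.1 w.2.1 w.2.2 := by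
        unfold eta
        dsimp only at hx hf
        rw [hx, hf, smul_comm]
      rw [he]
      exact Submodule.smul_mem _ _ (Submodule.subset_span ⟨⟨w, hwR⟩, rfl⟩)
end GS
end
end

section
/- Let (𝐚,𝐩,𝐪), (𝐜,𝐮,𝐯) ∈ Tri^H(n,d) and (𝐛,𝐫,𝐬) ∈ Tri^B(n,d), and let f^{𝐛,𝐫,𝐬}_{𝐚,𝐩,𝐪;𝐜,𝐮,𝐯} ∈ 𝕜 be the structure constants defined by ξ^𝐚_{𝐩,𝐪}·ξ^𝐜_{𝐮,𝐯} = Σ f^{𝐛,𝐫,𝐬}_{𝐚,𝐩,𝐪;𝐜,𝐮,𝐯} ξ^𝐛_{𝐫,𝐬}, the sum running over a set of S_d-orbit representatives (𝐛,𝐫,𝐬) of Tri^B(n,d). Then f^{𝐛,𝐫,𝐬}_{𝐚,𝐩,𝐪;𝐜,𝐮,𝐯} = Σ (−1)^{⟨𝐚,𝐩,𝐪⟩ + ⟨𝐜,𝐮,𝐯⟩ + ⟨𝐚′,𝐫,𝐭⟩ + ⟨𝐜′,𝐭,𝐬⟩ + ⟨𝐚′,𝐜′⟩} κ^𝐛_{𝐚′,𝐜′},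 where the sum is over all 𝐚′, 𝐜′ ∈ H^d and 𝐭 ∈ [1,n]^d such that (𝐚′,𝐫,𝐭) ∼ (𝐚,𝐩,𝐪) and (𝐜′,𝐭,𝐬) ∼ (𝐜,𝐮,𝐯). -/
open Finset

open scoped Classical TensorProduct

noncomputable section

namespace GS

variable {𝕜 A β : Type} [CommRing 𝕜] [NonUnitalRing A] [Module 𝕜 A]

variable {n : ℕ} {T : ℕ → Type} [∀ e, NonUnitalRing (T e)] [∀ e, Module 𝕜 (T e)]

theorem repr_X {𝕜 A β : Type} [CommRing 𝕜] [NonUnitalRing A] [Module 𝕜 A]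
    {n : ℕ} {T : ℕ → Type} [∀ e, NonUnitalRing (T e)] [∀ e, Module 𝕜 (T e)]
    {P : GoodPair 𝕜 A β} (D : Tower 𝕜 A β n T P) {d : ℕ} (a : Fin d → A)
    (r s : Fin d → Fin n) (b : Fin d → β) (r' s' : Fin d → Fin n) :
    (D.bas d).repr (D.X a r s) (b, r', s')
      = if r = r' ∧ s = s' then ∏ k, P.bas.repr (a k) (b k) else 0 := by
  let F : MultilinearMap 𝕜 (fun _ : Fin d => A) (T d) :=
    { toFun := fun a => D.X a r s
      map_update_add' := by
        intro inst m i x y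
        have h : inst = instDecidableEqFin d := Subsingleton.elim _ _
        subst h
        exact D.X_update_add m r s i x y
      map_update_smul' := by
        intro inst m i x y
        have h : inst = instDecidableEqFin d := Subsingleton.elim _ _
        subst h
        exact D.X_update_smul m r s i x y }
  let L : T d →ₗ[𝕜] 𝕜 := (D.bas d).coord (b, r', s')
  let G : MultilinearMap 𝕜 (fun _ : Fin d => A) 𝕜 :=
    (if r = r' ∧ s = s' then (1 : 𝕜) else 0) •
      (MultilinearMap.mkPiRing 𝕜 (Fin d) (1 : 𝕜)).compLinearMap
        (fun k => P.bas.coord (b k))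
  have key : L.compMultilinearMap F = G := by
    refine Module.Basis.ext_multilinear (fun _ => P.bas) ?_
    intro v
    have h1 : D.X (fun i => P.bas (v i)) r s = D.bas d (v, r, s) := (D.bas_eq d v r s).symm
    show (D.bas d).repr (D.X (fun i => P.bas (v i)) r s) (b, r', s') =
      (if r = r' ∧ s = s' then (1 : 𝕜) else 0) • ((MultilinearMap.mkPiRing 𝕜 (Fin d) (1 : 𝕜))
        (fun k => P.bas.repr (P.bas (v k)) (b k)))
    rw [h1, Module.Basis.repr_self, MultilinearMap.mkPiRing_apply]
    simp only [Module.Basis.repr_self, smul_eq_mul, mul_one, Finsupp.single_apply, Prod.mk.injEq]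
    rw [Finset.prod_ite_zero]
    simp only [Finset.prod_const_one, Finset.mem_univ, true_imp_iff, funext_iff]
    split_ifs <;> simp_all
  have := congrArg (fun M => M a) key
  have h2 : (D.bas d).repr (D.X a r s) (b, r', s') =
      (if r = r' ∧ s = s' then (1 : 𝕜) else 0) • ((MultilinearMap.mkPiRing 𝕜 (Fin d) (1 : 𝕜))
        (fun k => P.bas.repr (a k) (b k))) := this
  rw [h2, MultilinearMap.mkPiRing_apply]
  split_ifs <;> simp

theorem repr_xiB {𝕜 A β : Type} [CommRing 𝕜] [Nontrivial 𝕜] [NonUnitalRing A] [Module 𝕜 A]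
    {n : ℕ} {T : ℕ → Type} [∀ e, NonUnitalRing (T e)] [∀ e, Module 𝕜 (T e)]
    {P : GoodPair 𝕜 A β} (D : Tower 𝕜 A β n T P) (ord : LinearOrder (A × Fin n × Fin n))
    {d : ℕ} (w w' : WordTriple β n d) (h : ∀ σ : Equiv.Perm (Fin d), wAct w σ = w' → w = w') :
    (D.bas d).repr (xiB D ord w.1 w.2.1 w.2.2) w' = if w = w' then 1 else 0 := by
  have hX : ∀ σ : Equiv.Perm (Fin d),
      (D.bas d).repr (D.X ((fun k => P.bas (w.1 k)) ∘ σ) (w.2.1 ∘ σ) (w.2.2 ∘ σ)) w'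
        = if wAct w σ = w' then 1 else 0 := by
    intro σ
    have h1 := D.bas_eq d (w.1 ∘ σ) (w.2.1 ∘ σ) (w.2.2 ∘ σ)
    have h2 : (fun k => P.bas ((w.1 ∘ σ) k)) = (fun k => P.bas (w.1 k)) ∘ σ := rfl
    rw [h2] at h1
    rw [← h1, Module.Basis.repr_self, Finsupp.single_apply]
    rfl
  unfold xiB xiH
  rw [map_sum, Finsupp.finset_sum_apply]
  by_cases hw : w = w'
  · rw [if_pos hw]
    rw [Finset.sum_eq_single ((fun k => P.bas (w.1 k)), w.2.1, w.2.2)]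
    · have := hX 1
      rw [map_zsmul, Finsupp.smul_apply]
      have h3 : wAct w 1 = w' := by rw [← hw]; rfl
      rw [if_pos h3] at this
      have h4 : (D.bas d).repr (D.X (fun k => P.bas (w.1 k)) w.2.1 w.2.2) w' = 1 := this
      simp only [h4]
      rw [← two_mul, pow_mul]
      simp
    · intro x hx hne
      obtain ⟨σ, -, rfl⟩ := Finset.mem_image.1 hx
      rw [map_zsmul, Finsupp.smul_apply]
      simp only [hX]
      rw [if_neg, smul_zero]
      intro h5
      apply hne
      rw [← hw] at h5
      have e1 : w.1 ∘ σ = w.1 := congrArg (fun z => z.1) h5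
      have e2 : w.2.1 ∘ σ = w.2.1 := congrArg (fun z => z.2.1) h5
      have e3 : w.2.2 ∘ σ = w.2.2 := congrArg (fun z => z.2.2) h5
      have e4 : (fun k => P.bas (w.1 k)) ∘ σ = fun k => P.bas (w.1 k) := by
        funext k
        exact congrArg P.bas (congrFun e1 k)
      rw [e4, e2, e3]
    · intro hn
      exact absurd (Finset.mem_image.2 ⟨1, Finset.mem_univ _, rfl⟩) hn
  · rw [if_neg hw]
    apply Finset.sum_eq_zero
    intro x hx
    obtain ⟨σ, -, rfl⟩ := Finset.mem_image.1 hx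
    rw [map_zsmul, Finsupp.smul_apply]
    simp only [hX]
    rw [if_neg (fun h5 => hw (h σ h5)), smul_zero]

/-- (Generalized Green product rule.)  Let `(𝐚,𝐩,𝐪), (𝐜,𝐮,𝐯) ∈ Tri^H(n,d)`
and let `f` be the structure constants defined by
`ξ^𝐚_{𝐩,𝐪}·ξ^𝐜_{𝐮,𝐯} = Σ f^{𝐛,𝐫,𝐬} ξ^𝐛_{𝐫,𝐬}`, the sum over a set `R` of `S_d`-orbit
representatives of `Tri^B(n,d)`.  Then for `(𝐛,𝐫,𝐬) ∈ R`,
`f^{𝐛,𝐫,𝐬} = Σ (−1)^{⟨𝐚,𝐩,𝐪⟩+⟨𝐜,𝐮,𝐯⟩+⟨𝐚′,𝐫,𝐭⟩+⟨𝐜′,𝐭,𝐬⟩+⟨𝐚′,𝐜′⟩} κ^𝐛_{𝐚′,𝐜′}`,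
the sum over all `𝐚′, 𝐜′ ∈ H^d`, `𝐭 ∈ [1,n]^d` with `(𝐚′,𝐫,𝐭) ∼ (𝐚,𝐩,𝐪)` and
`(𝐜′,𝐭,𝐬) ∼ (𝐜,𝐮,𝐯)` (encoded below as the pairs of orbit elements with matching
row/column words). -/
theorem statement3 {𝕜 A β : Type} [CommRing 𝕜] [IsDomain 𝕜] [CharZero 𝕜]
    [NonUnitalRing A] [Module 𝕜 A] [SMulCommClass 𝕜 A A] [IsScalarTower 𝕜 A A]
    {n : ℕ} (hn : 0 < n) {T : ℕ → Type} [∀ e, NonUnitalRing (T e)] [∀ e, Module 𝕜 (T e)]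
    (P : GoodPair 𝕜 A β) (D : Tower 𝕜 A β n T P) (ord : LinearOrder (A × Fin n × Fin n))
    (d : ℕ) (R : Set (WordTriple β n d))
    (hR1 : ∀ w ∈ R, IsTriB P w.1 w.2.1 w.2.2)
    (hR2 : ∀ w : WordTriple β n d, IsTriB P w.1 w.2.1 w.2.2 →
      ∃! w' : WordTriple β n d, w' ∈ R ∧ ∃ σ : Equiv.Perm (Fin d), wAct w σ = w')
    (a : Fin d → A) (p q : Fin d → Fin n) (c : Fin d → A) (u v : Fin d → Fin n)
    (hA : IsTriH P a p q) (hC : IsTriH P c u v)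
    (f : WordTriple β n d →₀ 𝕜)
    (hsupp : ∀ w ∈ f.support, w ∈ R)
    (hdef : xiH D ord a p q * xiH D ord c u v
      = f.sum fun w cf => cf • xiB D ord w.1 w.2.1 w.2.2)
    (b : Fin d → β) (r s : Fin d → Fin n)
    (hmem : ((b, r, s) : WordTriple β n d) ∈ R) (htri : IsTriB P b r s) :
    f (b, r, s) =
      ∑ w ∈ (((univ.image fun σ : Equiv.Perm (Fin d) => (a ∘ σ, p ∘ σ, q ∘ σ)) ×ˢ
          (univ.image fun σ : Equiv.Perm (Fin d) => (c ∘ σ, u ∘ σ, v ∘ σ))).filter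
          fun w => w.1.2.1 = r ∧ w.2.2.1 = w.1.2.2 ∧ w.2.2.2 = s),
        ((-1 : 𝕜) ^ (ang P.od ord a p q + ang P.od ord c u v
            + ang P.od ord w.1.1 r w.1.2.2 + ang P.od ord w.2.1 w.1.2.2 s
            + koz P.od w.1.1 w.2.1))
          * ∏ k : Fin d, P.bas.repr (w.1.1 k * w.2.1 k) (b k) := by
  have hL := congrArg (fun x => (D.bas d).repr x (b, r, s)) hdef
  have hRHS : (D.bas d).repr (f.sum fun w cf => cf • xiB D ord w.1 w.2.1 w.2.2) (b, r, s)
      = f (b, r, s) := by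
    rw [Finsupp.sum, map_sum, Finsupp.finset_sum_apply]
    have : ∀ w ∈ f.support, (D.bas d).repr (f w • xiB D ord w.1 w.2.1 w.2.2) (b, r, s)
        = if w = (b, r, s) then f w else 0 := by
      intro w hw
      rw [map_smul, Finsupp.smul_apply, repr_xiB]
      · split_ifs <;> simp
      · intro σ hσ
        have hwR := hsupp w hw
        exact (hR2 w (hR1 w hwR)).unique ⟨hwR, 1, rfl⟩ ⟨hmem, σ, hσ⟩
    rw [Finset.sum_congr rfl this, Finset.sum_ite_eq']
    split_ifs with h
    · rfl
    · exact (Finsupp.notMem_support_iff.1 h).symm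
  rw [← hRHS, ← hdef]
  unfold xiH
  rw [Finset.sum_mul_sum, ← Finset.sum_product', map_sum, Finsupp.finset_sum_apply,
    Finset.sum_filter]
  apply Finset.sum_congr rfl
  rintro ⟨⟨a', p', q'⟩, ⟨c', u', v'⟩⟩ hw
  rw [Finset.mem_product] at hw
  have ha : ∀ k, Homog P (a' k) := by
    obtain ⟨σ, -, hσ⟩ := Finset.mem_image.1 hw.1
    have : a ∘ σ = a' := congrArg (fun z => z.1) hσ
    intro k
    rw [← this]
    exact (hA.1 (σ k)).1
  have hc : ∀ k, Homog P (c' k) := by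
    obtain ⟨σ, -, hσ⟩ := Finset.mem_image.1 hw.2
    have : c ∘ σ = c' := congrArg (fun z => z.1) hσ
    intro k
    rw [← this]
    exact (hC.1 (σ k)).1
  dsimp only
  rw [smul_mul_assoc, mul_smul_comm, D.X_mul _ _ _ _ _ _ ha hc]
  by_cases h1 : q' = u'
  · subst h1
    rw [if_pos rfl]
    simp only [map_zsmul, Finsupp.smul_apply, repr_X, true_and]
    by_cases h2 : p' = r ∧ v' = s
    · obtain ⟨rfl, rfl⟩ := h2
      simp only [and_self, if_true, zsmul_eq_mul, Int.cast_pow, Int.cast_neg, Int.cast_one]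
      ring
    · rw [if_neg h2, if_neg h2]
      simp
  · rw [if_neg h1, if_neg (fun h => h1 h.2.1.symm)]
    simp
end GS
end
end
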